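/- arXiv:1807.01005 — 2 statements merged into one kernel-verified Lean document; each statement's English description precedes it below -/
import Mathlib

section
/- Let X be a simplicial complex embedded in ℝ^d and Γ a finite collection of at least d+2 subcomplexes of X. If H̃_{d-|Γ'|}(⋂Γ', F) = 0 for every subcollection Γ' ⊆ Γ with 1 ≤ |Γ'| ≤ d+1, then ⋂Γ ≠ ∅. -/
open Finset

/-- The faces of an abstract simplicial complex: a set of nonempty finite sets of
vertices, closed under taking nonempty subsets. -/
def IsComplex {V : Type*} (S : Set (Finset V)) : Prop :=
  (∀ s ∈ S, s.Nonempty) ∧ ∀ s ∈ S, ∀ t ⊆ s, t.Nonempty → t ∈ S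

/-- The nerve of a collection `Γ` of (sub)complexes, as a set of finsets of the index
type: the simplices are the nonempty subcollections with a common face. -/
def nerveC {ι V : Type*} (Γ : ι → Set (Finset V)) : Set (Finset ι) :=
  {σ | σ.Nonempty ∧ (⋂ i ∈ (σ : Finset ι), Γ i).Nonempty}

/-- Simplicial `n`-chains (dimension `n`, i.e. on vertex sets of cardinality `n+1`)
on the vertex type `V`, with coefficients in `A`. -/
abbrev Chains (A V : Type*) [AddCommGroup A] [LinearOrder V] (n : ℕ) : Type _ :=
  {s : Finset V // s.card = n + 1} →₀ A

variable (R : Type*) [CommRing R] (A : Type*) [AddCommGroup A] [Module R A]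
variable (V : Type*) [LinearOrder V]

/-- The simplicial boundary map, with the usual alternating signs determined by the
linear order on the vertices. -/
noncomputable def bdry (n : ℕ) : Chains A V (n + 1) →ₗ[R] Chains A V n :=
  Finsupp.lsum R fun s =>
    ∑ v ∈ (s : Finset V).attach,
      ((-1 : ℤ) ^ (((s : Finset V).filter (fun w => w < v.1)).card)) •
        (Finsupp.lsingle (R := R) ⟨(s : Finset V).erase v.1, by
          rw [Finset.card_erase_of_mem v.2, s.2]; rfl⟩)

/-- The augmentation map on `0`-chains. -/
noncomputable def aug : Chains A V 0 →ₗ[R] A :=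
  Finsupp.lsum R fun _ => LinearMap.id

/-- Reduced cycles: kernel of the boundary map, resp. of the augmentation in degree 0. -/
noncomputable def cycles : (n : ℕ) → Submodule R (Chains A V n)
  | 0 => LinearMap.ker (aug R A V)
  | (n + 1) => LinearMap.ker (bdry R A V n)

/-- Chains supported on the simplices belonging to `S`. -/
def chainsIn (S : Set (Finset V)) (n : ℕ) : Submodule R (Chains A V n) :=
  Finsupp.supported A R {s : {s : Finset V // s.card = n + 1} | ↑s ∈ S}

/-- Reduced cycles of the complex `S`. -/
noncomputable def cyclesIn (S : Set (Finset V)) (n : ℕ) : Submodule R (Chains A V n) :=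
  cycles R A V n ⊓ chainsIn R A V S n

/-- Boundaries of chains of the complex `S`. -/
noncomputable def boundariesIn (S : Set (Finset V)) (n : ℕ) : Submodule R (Chains A V n) :=
  Submodule.map (bdry R A V n) (chainsIn R A V S (n + 1))

/-- Reduced simplicial homology of the complex `S` in degree `n ≥ 0`,
with coefficients in the `R`-module `A`. -/
noncomputable abbrev redH (S : Set (Finset V)) (n : ℕ) : Type _ :=
  (cyclesIn R A V S n) ⧸
    (Submodule.comap (cyclesIn R A V S n).subtype (boundariesIn R A V S n))

/-- Vanishing of the reduced homology of `S` in degree `n : ℤ`, with the convention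
that `H̃₋₁(S) = 0` iff `S` is nonempty (and trivial vanishing below degree `-1`). -/
def RedHVanish (S : Set (Finset V)) (n : ℤ) : Prop :=
  if n < -1 then True
  else if n = -1 then S.Nonempty
  else Subsingleton (redH R A V S n.toNat)

open scoped Classical in
/-- The dimension (rank) of the reduced homology of `S` in degree `n : ℤ`; in degree `-1`
it is `0` iff `S` is nonempty, in accordance with the convention. -/
noncomputable def redHRank (S : Set (Finset V)) (n : ℤ) : Cardinal :=
  if n < -1 then 0
  else if n = -1 then (if S.Nonempty then (0 : Cardinal) else 1)
  else Module.rank R (redH R A V S n.toNat)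

/-!
A complex in `d`-dimensional space has no nonzero cycle in degree `d` or above. Otherwise take the
last point at which a generic ray, starting inside one of the `d`-simplices of the cycle, meets
these simplices. It lies in the relative interior of a facet of one of them; if another one shared
that facet, the two would lie on opposite sides of it, and the ray would continue into one of them.
So the facet is free, and the boundary of the cycle cannot vanish there.

For disjoint collections `J` and `K ≠ ∅` of subcomplexes, put `M(J, K) = (⋂ J) ∩ (⋃ K)`. Then
`M(J, K ∪ {k})` is the union of `M(J, K)` and `M(J, {k})`, which intersect in `M(J ∪ {k}, K)`, so
by Mayer-Vietoris and induction on `K` the hypothesis on intersections gives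
`H̃_{d-1-|J|}(M(J, K)) = 0`. In higher degrees, induct on `J`: for `J = ∅` there are no cycles, and
`M(J ∪ {j}, K)` is the intersection of `M(J, K)` and `M(J, {j})`, whose union is `M(J, K ∪ {j})`.
As soon as `|J| ≥ d`, the vanishing range reaches degree `-1`, so that `⋂ (J ∪ {k}) = M(J, {k})` is
nonempty.
-/

section AugmentedChains

/-- The augmented chains of `S` on simplices with `n` vertices, that is, in dimension `n - 1`. -/
def augChains (A : Type*) [AddCommGroup A] {α : Type*} (S : LowerSet (Finset α)) (n : ℕ) :
    Submodule ℤ (Finset α →₀ A) :=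
  Finsupp.supported A ℤ {s | s ∈ S ∧ #s = n}

variable {A} {α : Type*}

theorem augChains_mono {S T : LowerSet (Finset α)} (hST : S ≤ T) (n : ℕ) :
    augChains A S n ≤ augChains A T n :=
  Finsupp.supported_mono fun _ hs => ⟨hST hs.1, hs.2⟩

theorem augChains_inf (S T : LowerSet (Finset α)) (n : ℕ) :
    augChains A (S ⊓ T) n = augChains A S n ⊓ augChains A T n := by
  rw [augChains, augChains, augChains, ← Finsupp.supported_inter]
  congr 1
  ext s
  simp only [LowerSet.mem_inf_iff, Set.mem_ofPred_eq, Set.mem_inter_iff]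
  tauto

theorem augChains_sup (S T : LowerSet (Finset α)) (n : ℕ) :
    augChains A (S ⊔ T) n = augChains A S n ⊔ augChains A T n := by
  rw [augChains, augChains, augChains, ← Finsupp.supported_union]
  congr 1
  ext s
  simp only [LowerSet.mem_sup_iff, Set.mem_ofPred_eq, Set.mem_union]
  tauto

end AugmentedChains

section AugmentedComplex

variable {A V}

/-- The incidence number `[s : s.erase v]`, with the sign convention of `bdry`. -/
def faceSign (s : Finset V) (v : V) : ℤ :=
  (-1) ^ #{w ∈ s | w < v}

theorem faceSign_singleton (v : V) : faceSign {v} v = 1 := by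
  simp [faceSign, filter_singleton]

theorem faceSign_mul_self (s : Finset V) (v : V) : faceSign s v * faceSign s v = 1 := by
  rw [faceSign, ← pow_add, Even.neg_one_pow ⟨_, rfl⟩]

theorem faceSign_mul_faceSign_erase_of_lt {s : Finset V} {v w : V} (hv : v ∈ s) (hvw : v < w) :
    faceSign s v * faceSign (s.erase v) w = -(faceSign s w * faceSign (s.erase w) v) := by
  have below_v : {x ∈ s.erase w | x < v} = {x ∈ s | x < v} := by grind
  have below_w : {x ∈ s | x < w} = insert v {x ∈ s.erase v | x < w} := by grind
  simp only [faceSign, below_v, below_w]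
  rw [card_insert_of_notMem (by simp), pow_succ]
  ring

theorem faceSign_mul_faceSign_erase {s : Finset V} {v w : V} (hv : v ∈ s) (hw : w ∈ s)
    (hvw : v ≠ w) :
    faceSign s v * faceSign (s.erase v) w = -(faceSign s w * faceSign (s.erase w) v) := by
  rcases hvw.lt_or_gt with hlt | hgt
  · exact faceSign_mul_faceSign_erase_of_lt hv hlt
  · rw [faceSign_mul_faceSign_erase_of_lt hw hgt, neg_neg]

/-- The boundary map of the augmented simplicial chain complex on `V`, all degrees at once. The
basis element `∅` spans degree `-1`, so that the augmentation is the boundary on vertices. -/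
noncomputable def augBdry : (Finset V →₀ A) →ₗ[ℤ] (Finset V →₀ A) :=
  Finsupp.lsum ℤ fun s => ∑ v ∈ s, faceSign s v • Finsupp.lsingle (s.erase v)

theorem augBdry_single (s : Finset V) (a : A) :
    augBdry (Finsupp.single s a) = ∑ v ∈ s, faceSign s v • Finsupp.single (s.erase v) a := by
  simp [augBdry]

theorem augBdry_eq_sum (c : Finset V →₀ A) :
    augBdry c = ∑ s ∈ c.support, ∑ v ∈ s, faceSign s v • Finsupp.single (s.erase v) (c s) := by
  conv_lhs => rw [← c.sum_single, Finsupp.sum, map_sum]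
  simp only [augBdry_single]

theorem augBdry_augBdry (c : Finset V →₀ A) : augBdry (augBdry c) = 0 := by
  induction c using Finsupp.induction_linear with
  | zero => simp
  | add c c' hc hc' => simp [hc, hc']
  | single s a =>
    simp only [augBdry_single, map_sum, map_zsmul, smul_sum, smul_smul]
    rw [sum_sigma']
    -- The face omitting both `v` and `w` arises twice, with opposite signs.
    refine sum_involution (fun p _ => ⟨p.2, p.1⟩) ?_ ?_ ?_ fun _ _ => rfl
    · rintro ⟨v, w⟩ hvw
      obtain ⟨hv, hwv, hw⟩ : v ∈ s ∧ w ≠ v ∧ w ∈ s := by simpa using hvw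
      rw [erase_right_comm (a := w), ← add_smul, faceSign_mul_faceSign_erase hw hv hwv,
        add_neg_cancel, zero_smul]
    · grind
    · grind

theorem augBdry_apply_erase {c : Finset V →₀ A} {s : Finset V} {v : V} (hv : v ∈ s)
    (hfree : ∀ s' ∈ c.support, s.erase v ⊆ s' → s' = s) :
    augBdry c (s.erase v) = faceSign s v • c s := by
  rw [augBdry_eq_sum, Finsupp.finsetSum_apply, sum_eq_single s]
  · rw [Finsupp.finsetSum_apply, sum_eq_single_of_mem v hv]
    · simp
    · intro w hw hwv
      have : s.erase w ≠ s.erase v := fun h => hwv (erase_injOn s hw hv h)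
      simp [this]
  · intro s' hs' hne
    rw [Finsupp.finsetSum_apply]
    refine sum_eq_zero fun w _ => ?_
    have : s'.erase w ≠ s.erase v := fun h => hne (hfree s' hs' (h ▸ erase_subset w s'))
    simp [this]
  · intro hs
    simp [Finsupp.notMem_support_iff.1 hs]

theorem eq_zero_of_augBdry_eq_zero_of_free {c : Finset V →₀ A} (hc : augBdry c = 0)
    {s : Finset V} {v : V} (hv : v ∈ s) (hfree : ∀ s' ∈ c.support, s.erase v ⊆ s' → s' = s) :
    c s = 0 := by
  have h : faceSign s v • c s = 0 := by rw [← augBdry_apply_erase hv hfree, hc, Finsupp.zero_apply]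
  rw [← one_smul ℤ (c s), ← faceSign_mul_self s v, mul_smul, h, smul_zero]

theorem augBdry_mem_augChains {S : LowerSet (Finset V)} {n : ℕ} {c : Finset V →₀ A}
    (hc : c ∈ augChains A S (n + 1)) : augBdry c ∈ augChains A S n := by
  rw [augBdry_eq_sum]
  refine sum_mem fun s hs => sum_mem fun v hv => zsmul_mem ?_ _
  obtain ⟨hsS, hcard⟩ := hc hs
  refine Finsupp.single_mem_supported ℤ _ ⟨S.lower (erase_subset v s) hsS, ?_⟩
  rw [card_erase_of_mem hv, hcard, Nat.add_sub_cancel]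

theorem augBdry_eq_zero_of_mem_augChains_zero {S : LowerSet (Finset V)} {c : Finset V →₀ A}
    (hc : c ∈ augChains A S 0) : augBdry c = 0 := by
  rw [augBdry_eq_sum]
  refine sum_eq_zero fun s hs => ?_
  rw [card_eq_zero.1 (hc hs).2, sum_empty]

variable (A) in
/-- Vanishing of the homology of the augmented chain complex of `S` at the simplices with `n`
vertices, that is, of the reduced homology of `S` in degree `n - 1`. -/
def AugAcyclic (S : LowerSet (Finset V)) (n : ℕ) : Prop :=
  ∀ c ∈ augChains A S n, augBdry c = 0 → ∃ b ∈ augChains A S (n + 1), augBdry b = c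

theorem AugAcyclic.inf {S T : LowerSet (Finset V)} {n : ℕ} (hS : AugAcyclic A S n)
    (hT : AugAcyclic A T n) (hsup : AugAcyclic A (S ⊔ T) (n + 1)) : AugAcyclic A (S ⊓ T) n := by
  intro c hc hc0
  rw [augChains_inf] at hc
  obtain ⟨a, ha, hac⟩ := hS c hc.1 hc0
  obtain ⟨b, hb, hbc⟩ := hT c hc.2 hc0
  have hab : a - b ∈ augChains A (S ⊔ T) (n + 1) := by
    rw [augChains_sup]
    exact Submodule.sub_mem_sup ha hb
  obtain ⟨e, he, hea⟩ := hsup (a - b) hab (by rw [map_sub, hac, hbc, sub_self])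
  rw [augChains_sup] at he
  obtain ⟨x, hx, y, hy, rfl⟩ := Submodule.mem_sup.1 he
  have hshift : a - augBdry x = b + augBdry y := by
    rw [map_add] at hea
    rw [sub_eq_iff_eq_add, add_assoc, add_comm (augBdry y), hea, add_sub_cancel]
  refine ⟨a - augBdry x, ?_, by rw [map_sub, augBdry_augBdry, sub_zero, hac]⟩
  rw [augChains_inf]
  exact ⟨sub_mem ha (augBdry_mem_augChains hx),
    hshift ▸ add_mem hb (augBdry_mem_augChains hy)⟩

theorem AugAcyclic.sup {S T : LowerSet (Finset V)} {n : ℕ} (hS : AugAcyclic A S n)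
    (hT : AugAcyclic A T n) (hinf : ∀ m, m + 1 = n → AugAcyclic A (S ⊓ T) m) :
    AugAcyclic A (S ⊔ T) n := by
  intro c hc hc0
  rw [augChains_sup] at hc
  obtain ⟨x, hx, y, hy, rfl⟩ := Submodule.mem_sup.1 hc
  have hxy : augBdry x = -augBdry y := eq_neg_of_add_eq_zero_left (by rw [← map_add, hc0])
  obtain ⟨e, he, hex⟩ : ∃ e ∈ augChains A (S ⊓ T) n, augBdry e = augBdry x := by
    cases n with
    | zero => exact ⟨0, zero_mem _, by rw [map_zero, augBdry_eq_zero_of_mem_augChains_zero hx]⟩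
    | succ m =>
      refine hinf m rfl _ ?_ (augBdry_augBdry x)
      rw [augChains_inf]
      exact ⟨augBdry_mem_augChains hx, hxy ▸ neg_mem (augBdry_mem_augChains hy)⟩
  rw [augChains_inf] at he
  obtain ⟨a, ha, hax⟩ := hS (x - e) (sub_mem hx he.1) (by rw [map_sub, hex, sub_self])
  obtain ⟨b, hb, hby⟩ := hT (y + e) (add_mem hy he.2)
    (by rw [map_add, hex, hxy, add_neg_cancel])
  refine ⟨a + b, ?_, by rw [map_add, hax, hby]; abel⟩
  rw [augChains_sup]
  exact Submodule.add_mem_sup ha hb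

end AugmentedComplex

section Helly

variable {A V} {ι : Type*} {d : ℕ} {S : ι → LowerSet (Finset V)}

theorem disjoint_cons_left {J K : Finset ι} {j : ι} (hj : j ∉ J) :
    Disjoint (cons j J hj) K ↔ j ∉ K ∧ Disjoint J K := by
  classical rw [cons_eq_insert, disjoint_insert_left]

theorem disjoint_cons_right {J K : Finset ι} {k : ι} (hk : k ∉ K) :
    Disjoint J (cons k K hk) ↔ k ∉ J ∧ Disjoint J K := by
  rw [disjoint_comm, disjoint_cons_left, disjoint_comm]

theorem augAcyclic_inf_inf_sup_of_card_eq
    (hS : ∀ J : Finset ι, J.Nonempty → ∀ n, n + #J = d + 1 → AugAcyclic A (J.inf S) n)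
    {J K : Finset ι} (hK : K.Nonempty) (hJK : Disjoint J K) {n : ℕ} (hn : n + #J = d) :
    AugAcyclic A (J.inf S ⊓ K.sup S) n := by
  have hcons {J : Finset ι} {k : ι} (hk : k ∉ J) {n : ℕ} (hn : n + #J = d) :
      AugAcyclic A (J.inf S ⊓ S k) n := by
    rw [inf_comm, ← inf_cons hk]
    exact hS _ (cons_nonempty hk) n (by rw [card_cons]; omega)
  induction hK using Nonempty.cons_induction generalizing J n with
  | singleton k =>
    rw [sup_singleton]
    exact hcons (disjoint_singleton_right.1 hJK) hn
  | cons k K hk _ ih =>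
    obtain ⟨hkJ, hJK⟩ := (disjoint_cons_right hk).1 hJK
    rw [sup_cons, inf_sup_left]
    refine (hcons hkJ hn).sup (ih hJK hn) fun m hm => ?_
    rw [← inf_inf_distrib_left, ← inf_assoc, inf_comm (J.inf S), ← inf_cons hkJ]
    exact ih ((disjoint_cons_left hkJ).2 ⟨hk, hJK⟩) (by rw [card_cons]; omega)

theorem augAcyclic_inf_inf_sup_of_le_card {T : LowerSet (Finset V)}
    (hT : ∀ n > d, ∀ c ∈ augChains A T n, augBdry c = 0 → c = 0) (hST : ∀ i, S i ≤ T)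
    (hS : ∀ J : Finset ι, J.Nonempty → ∀ n, n + #J = d + 1 → AugAcyclic A (J.inf S) n)
    {J K : Finset ι} (hK : K.Nonempty) (hJK : Disjoint J K) {n : ℕ} (hn : d ≤ n + #J) :
    AugAcyclic A (J.inf S ⊓ K.sup S) n := by
  induction J using cons_induction generalizing K n with
  | empty =>
    rcases hn.eq_or_lt with heq | hlt
    · exact augAcyclic_inf_inf_sup_of_card_eq hS hK hJK heq.symm
    intro c hc hc0
    have hle : (∅ : Finset ι).inf S ⊓ K.sup S ≤ T :=
      inf_le_right.trans (Finset.sup_le fun i _ => hST i)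
    have hc_eq : c = 0 := hT n (by simpa using hlt) c (augChains_mono hle n hc) hc0
    exact ⟨0, zero_mem _, by rw [map_zero, hc_eq]⟩
  | cons j J hj ih =>
    rcases hn.eq_or_lt with heq | hlt
    · exact augAcyclic_inf_inf_sup_of_card_eq hS hK hJK heq.symm
    obtain ⟨hjK, hJK⟩ := (disjoint_cons_left hj).1 hJK
    rw [card_cons] at hlt
    rw [inf_cons, inf_comm (S j), inf_assoc, inf_inf_distrib_left]
    have hj_single := ih (singleton_nonempty j) (disjoint_singleton_right.2 hj) (n := n) (by omega)
    rw [sup_singleton] at hj_single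
    refine hj_single.inf (ih hK hJK (by omega)) ?_
    rw [← inf_sup_left, ← sup_cons hjK]
    exact ih (cons_nonempty hjK) ((disjoint_cons_right hjK).2 ⟨hj, hJK⟩) (by omega)

theorem augAcyclic_inf_of_lt_add_card {T : LowerSet (Finset V)}
    (hT : ∀ n > d, ∀ c ∈ augChains A T n, augBdry c = 0 → c = 0) (hST : ∀ i, S i ≤ T)
    (hS : ∀ J : Finset ι, J.Nonempty → ∀ n, n + #J = d + 1 → AugAcyclic A (J.inf S) n)
    {I : Finset ι} (hI : I.Nonempty) {n : ℕ} (hn : d < n + #I) : AugAcyclic A (I.inf S) n := by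
  obtain ⟨J, i, hi, rfl⟩ := hI.exists_cons_eq
  rw [card_cons] at hn
  rw [inf_cons, inf_comm, ← sup_singleton (f := S)]
  exact augAcyclic_inf_inf_sup_of_le_card hT hST hS (singleton_nonempty i)
    (disjoint_singleton_right.2 hi) (by omega)

end Helly

section AugmentedFaces

variable {α : Type*} {S T : Set (Finset α)}

/-- The simplices of an abstract complex `S` together with the empty simplex. Describing them
through their nonempty subsets gives a lower set for every `S`, compatible with all
intersections. -/
def augFaces (S : Set (Finset α)) : LowerSet (Finset α) where
  carrier := {s | ∀ t ⊆ s, t.Nonempty → t ∈ S}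
  lower' _ _ hts hs u hut := hs u (hut.trans hts)

theorem mem_of_mem_augFaces {s : Finset α} (hs : s ∈ augFaces S) (hne : s.Nonempty) : s ∈ S :=
  hs s Subset.rfl hne

theorem IsComplex.mem_augFaces (hS : IsComplex S) {s : Finset α} (hs : s ∈ S) : s ∈ augFaces S :=
  hS.2 s hs

theorem augFaces_mono (hST : S ⊆ T) : augFaces S ≤ augFaces T :=
  fun _ hs t hts hne => hST (hs t hts hne)

theorem inf_augFaces {ι : Type*} (Γ : ι → Set (Finset α)) (J : Finset ι) :
    (J.inf fun i => augFaces (Γ i)) = augFaces (⋂ i ∈ J, Γ i) := by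
  refine le_antisymm (fun s hs t hts hne => ?_) (Finset.le_inf fun i hi => ?_)
  · rw [Set.mem_iInter₂]
    exact fun i hi => (Finset.inf_le (f := fun i => augFaces (Γ i)) hi) hs t hts hne
  · exact augFaces_mono (Set.biInter_subset_of_mem hi)

theorem IsComplex.biInter {ι : Type*} {Γ : ι → Set (Finset α)} (hΓ : ∀ i, IsComplex (Γ i))
    {J : Finset ι} (hJ : J.Nonempty) : IsComplex (⋂ i ∈ J, Γ i) := by
  obtain ⟨i, hi⟩ := hJ
  refine ⟨fun s hs => (hΓ i).1 s (Set.mem_iInter₂.1 hs i hi), fun s hs t hts hne => ?_⟩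
  rw [Set.mem_iInter₂] at hs ⊢
  exact fun j hj => (hΓ j).2 s (hs j hj) t hts hne

end AugmentedFaces

section Comparison

variable {A V} {S : Set (Finset V)}

/-- The inclusion of the `n`-dimensional chains into the augmented chain complex. -/
noncomputable def toAugChains (n : ℕ) : Chains A V n →ₗ[ℤ] (Finset V →₀ A) :=
  Finsupp.lmapDomain A ℤ Subtype.val

theorem toAugChains_single {n : ℕ} (s : {s : Finset V // #s = n + 1}) (a : A) :
    toAugChains n (Finsupp.single s a) = Finsupp.single (s : Finset V) a :=
  Finsupp.mapDomain_single

theorem toAugChains_injective (n : ℕ) :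
    Function.Injective (toAugChains n : Chains A V n → (Finset V →₀ A)) :=
  Finsupp.mapDomain_injective Subtype.val_injective

theorem augBdry_toAugChains_succ {n : ℕ} (c : Chains A V (n + 1)) :
    augBdry (toAugChains (n + 1) c) = toAugChains n (bdry R A V n c) := by
  induction c using Finsupp.induction_linear with
  | zero => simp
  | add c c' hc hc' => simp only [map_add, hc, hc']
  | single s a =>
    rw [toAugChains_single, augBdry_single, bdry, Finsupp.lsum_single, LinearMap.sum_apply,
      map_sum, ← sum_attach]
    simp only [LinearMap.smul_apply, map_zsmul, Finsupp.lsingle_apply, toAugChains_single,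
      faceSign]

theorem augBdry_toAugChains_zero (c : Chains A V 0) :
    augBdry (toAugChains 0 c) = Finsupp.single ∅ (aug R A V c) := by
  induction c using Finsupp.induction_linear with
  | zero => simp
  | add c c' hc hc' => simp only [map_add, Finsupp.single_add, hc, hc']
  | single s a =>
    obtain ⟨s, hs⟩ := s
    obtain ⟨v, rfl⟩ := card_eq_one.1 (hs : #s = 1)
    rw [toAugChains_single, augBdry_single, sum_singleton, faceSign_singleton, one_smul]
    simp [aug]

theorem mem_cycles_iff {n : ℕ} (c : Chains A V n) :
    c ∈ cycles R A V n ↔ augBdry (toAugChains n c) = 0 := by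
  cases n with
  | zero =>
    rw [augBdry_toAugChains_zero R, Finsupp.single_eq_zero]
    rfl
  | succ n =>
    rw [augBdry_toAugChains_succ R, map_eq_zero_iff _ (toAugChains_injective n)]
    rfl

theorem toAugChains_mem_augChains (hS : IsComplex S) {n : ℕ} {c : Chains A V n}
    (hc : c ∈ chainsIn R A V S n) : toAugChains n c ∈ augChains A (augFaces S) (n + 1) := by
  classical
  intro s hs
  obtain ⟨t, ht, rfl⟩ := mem_image.1 (Finsupp.mapDomain_support hs)
  exact ⟨hS.mem_augFaces (hc ht), t.2⟩

theorem exists_toAugChains_eq {n : ℕ} {c : Finset V →₀ A}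
    (hc : c ∈ augChains A (augFaces S) (n + 1)) :
    ∃ b ∈ chainsIn R A V S n, toAugChains n b = c := by
  refine ⟨c.comapDomain Subtype.val Subtype.val_injective.injOn, fun s hs => ?_,
    Finsupp.mapDomain_comapDomain _ Subtype.val_injective c fun s hs => ⟨⟨s, (hc hs).2⟩, rfl⟩⟩
  rw [Finsupp.comapDomain_support, mem_coe, mem_preimage] at hs
  exact mem_of_mem_augFaces (hc hs).1 (card_pos.1 (by rw [s.2]; exact n.succ_pos))

theorem IsComplex.augAcyclic_succ_of_subsingleton_redH (hS : IsComplex S) {n : ℕ}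
    (h : Subsingleton (redH R A V S n)) : AugAcyclic A (augFaces S) (n + 1) := by
  intro c hc hc0
  obtain ⟨z, hzS, rfl⟩ := exists_toAugChains_eq R hc
  have hz : z ∈ cyclesIn R A V S n := ⟨(mem_cycles_iff R z).2 hc0, hzS⟩
  have htop := Submodule.Quotient.subsingleton_iff.1 h
  obtain ⟨b, hb, hbz⟩ : z ∈ boundariesIn R A V S n :=
    (htop ▸ Submodule.mem_top : (⟨z, hz⟩ : cyclesIn R A V S n) ∈
      Submodule.comap (cyclesIn R A V S n).subtype (boundariesIn R A V S n))
  exact ⟨toAugChains (n + 1) b, toAugChains_mem_augChains R hS hb,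
    by rw [augBdry_toAugChains_succ R, hbz]⟩

theorem IsComplex.augAcyclic_zero (hS : IsComplex S) (hne : S.Nonempty) :
    AugAcyclic A (augFaces S) 0 := by
  obtain ⟨s, hs⟩ := hne
  obtain ⟨v, hv⟩ := hS.1 s hs
  have hvS : {v} ∈ S := hS.2 s hs {v} (singleton_subset_iff.2 hv) (singleton_nonempty v)
  intro c hc _
  have hc_single : Finsupp.single ∅ (c ∅) = c :=
    (Finsupp.support_subset_singleton.1 fun s hs =>
      mem_singleton.2 (card_eq_zero.1 (hc hs).2)).symm
  refine ⟨Finsupp.single {v} (c ∅),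
    Finsupp.single_mem_supported ℤ _ ⟨hS.mem_augFaces hvS, card_singleton v⟩, ?_⟩
  rw [augBdry_single, sum_singleton, faceSign_singleton, one_smul, erase_singleton, hc_single]

theorem nonempty_of_augAcyclic_zero [Nontrivial A] (h : AugAcyclic A (augFaces S) 0) :
    S.Nonempty := by
  obtain ⟨a, ha⟩ := exists_ne (0 : A)
  have hempty : ∅ ∈ augFaces S := fun t ht hne => absurd (subset_empty.1 ht) hne.ne_empty
  obtain ⟨b, hb, hba⟩ := h (Finsupp.single ∅ a)
    (Finsupp.single_mem_supported ℤ _ ⟨hempty, card_empty⟩) (by rw [augBdry_single, sum_empty])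
  obtain ⟨s, hs⟩ : b.support.Nonempty := by
    rw [Finsupp.support_nonempty_iff]
    rintro rfl
    rw [map_zero, eq_comm, Finsupp.single_eq_zero] at hba
    exact ha hba
  exact ⟨s, mem_of_mem_augFaces (hb hs).1 (card_pos.1 (by rw [(hb hs).2]; exact one_pos))⟩

theorem IsComplex.augAcyclic_of_redHVanish (hS : IsComplex S) {n : ℕ}
    (h : RedHVanish R A V S ((n : ℤ) - 1)) : AugAcyclic A (augFaces S) n := by
  cases n with
  | zero => exact hS.augAcyclic_zero (by simpa [RedHVanish] using h)
  | succ n =>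
    rw [Nat.cast_succ, add_sub_cancel_right, RedHVanish, if_neg (by omega), if_neg (by omega)] at h
    exact hS.augAcyclic_succ_of_subsingleton_redH R h

end Comparison

section Moment

variable {𝕜 E : Type*}

/-- The weighted sum `∑ a w • w` together with the total weight `∑ a w` of a weight `a`. Keeping
track of both turns affine relations between points into linear ones. -/
noncomputable def moment (𝕜 : Type*) {E : Type*} [Ring 𝕜] [AddCommGroup E] [Module 𝕜 E] :
    (E →₀ 𝕜) →ₗ[𝕜] E × 𝕜 :=
  Finsupp.linearCombination 𝕜 fun w => (w, 1)

theorem moment_eq_of_mem_supported [Ring 𝕜] [AddCommGroup E] [Module 𝕜 E] {s : Finset E}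
    {a : E →₀ 𝕜} (ha : a ∈ Finsupp.supported 𝕜 𝕜 (s : Set E)) :
    moment 𝕜 a = (∑ w ∈ s, a w • w, ∑ w ∈ s, a w) := by
  rw [moment, Finsupp.linearCombination_apply_of_mem_supported 𝕜 ha]
  ext <;> simp [Prod.fst_sum, Prod.snd_sum]

theorem moment_add_smul [Ring 𝕜] [AddCommGroup E] [Module 𝕜 E] {a b : E →₀ 𝕜} {x u : E}
    (hax : moment 𝕜 a = (x, 1)) (hbu : moment 𝕜 b = (u, 0)) (t : 𝕜) :
    moment 𝕜 (a + t • b) = (x + t • u, 1) := by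
  rw [map_add, map_smul, hax, hbu, Prod.smul_mk, Prod.mk_add_mk, smul_zero, add_zero]

theorem linearIndepOn_of_affineIndependent [Ring 𝕜] [AddCommGroup E] [Module 𝕜 E] {s : Finset E}
    (hs : AffineIndependent 𝕜 ((↑) : s → E)) :
    LinearIndepOn 𝕜 (fun w : E => (w, (1 : 𝕜))) (s : Set E) := by
  refine linearIndepOn_iff.2 fun a ha ha0 => ?_
  obtain ⟨hsum, htotal⟩ := Prod.ext_iff.1 ((moment_eq_of_mem_supported ha).symm.trans ha0)
  ext w
  by_cases hw : w ∈ s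
  · exact hs.eq_zero_of_sum_eq_zero_subtype htotal hsum w hw
  · exact Finsupp.notMem_support_iff.1 fun h => hw (ha h)

theorem eq_of_moment_eq [Ring 𝕜] [AddCommGroup E] [Module 𝕜 E] {s : Finset E}
    (hs : AffineIndependent 𝕜 ((↑) : s → E)) {a b : E →₀ 𝕜}
    (ha : a ∈ Finsupp.supported 𝕜 𝕜 (s : Set E)) (hb : b ∈ Finsupp.supported 𝕜 𝕜 (s : Set E))
    (hab : moment 𝕜 a = moment 𝕜 b) : a = b :=
  sub_eq_zero.1 <| linearIndepOn_iff.1 (linearIndepOn_of_affineIndependent hs) (a - b)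
    (sub_mem ha hb) (by rw [← moment, map_sub, hab, sub_self])

theorem exists_moment_eq [Field 𝕜] [AddCommGroup E] [Module 𝕜 E] [FiniteDimensional 𝕜 E]
    {s : Finset E} (hs : AffineIndependent 𝕜 ((↑) : s → E)) (hcard : #s = Module.finrank 𝕜 E + 1)
    (z : E × 𝕜) : ∃ a ∈ Finsupp.supported 𝕜 𝕜 (s : Set E), moment 𝕜 a = z := by
  have hspan : Submodule.span 𝕜 ((fun w : E => (w, (1 : 𝕜))) '' s) = ⊤ := by
    rw [Set.image_eq_range]
    exact (linearIndepOn_of_affineIndependent hs).linearIndependent.span_eq_top_of_card_eq_finrank'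
      (by simp [hcard])
  exact (Finsupp.mem_span_image_iff_linearCombination 𝕜).1 (hspan ▸ Submodule.mem_top)

variable [Field 𝕜] [LinearOrder 𝕜] [IsStrictOrderedRing 𝕜] [AddCommGroup E] [Module 𝕜 E]

theorem mem_convexHull_iff_exists_moment_eq {s : Finset E} {x : E} :
    x ∈ convexHull 𝕜 (s : Set E) ↔
      ∃ a ∈ Finsupp.supported 𝕜 𝕜 (s : Set E), 0 ≤ a ∧ moment 𝕜 a = (x, 1) := by
  classical
  rw [mem_convexHull']
  constructor
  · rintro ⟨f, hf, htotal, hsum⟩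
    have hg : Finsupp.indicator s (fun w _ => f w) ∈ Finsupp.supported 𝕜 𝕜 (s : Set E) :=
      Finsupp.support_indicator_subset _ _
    refine ⟨_, hg, fun w => ?_, ?_⟩
    · by_cases hw : w ∈ s <;> simp [hw, hf]
    · rw [moment_eq_of_mem_supported hg, ← htotal, ← hsum]
      exact Prod.ext (sum_congr rfl fun w hw => by simp [hw])
        (sum_congr rfl fun w hw => by simp [hw])
  · rintro ⟨a, ha, ha0, hax⟩
    obtain ⟨hsum, htotal⟩ := Prod.ext_iff.1 ((moment_eq_of_mem_supported ha).symm.trans hax)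
    exact ⟨a, fun w _ => ha0 w, htotal, hsum⟩

end Moment

section RatioTest

variable {α 𝕜 : Type*} [Field 𝕜] [LinearOrder 𝕜] [IsStrictOrderedRing 𝕜] {a b : α →₀ 𝕜}

/-- The ratio test of the simplex method: the tightest constraint `a w + t * b w = 0` gives the
last `t`. -/
theorem exists_apply_add_mul_eq_zero {t₀ : 𝕜} (h₀ : 0 ≤ a + t₀ • b) (hb : ¬ 0 ≤ b) :
    ∃ t w, b w < 0 ∧ a w + t * b w = 0 ∧ 0 ≤ a + t • b := by
  classical
  obtain ⟨w₀, hw₀⟩ : ∃ w, b w < 0 := by simpa [Finsupp.le_def] using hb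
  obtain ⟨w, hw, hmin⟩ := exists_min_image {w ∈ b.support | b w < 0} (fun w => a w / -b w)
    ⟨w₀, by simp [hw₀, hw₀.ne]⟩
  have hbw : b w < 0 := (mem_filter.1 hw).2
  have ht₀ {w' : α} (hw' : b w' < 0) : t₀ ≤ a w' / -b w' := by
    rw [le_div_iff₀ (neg_pos.2 hw')]
    have := h₀ w'
    simp only [Finsupp.coe_zero, Pi.zero_apply, Finsupp.add_apply, Finsupp.smul_apply,
      smul_eq_mul] at this
    linarith
  refine ⟨a w / -b w, w, hbw, by field_simp [hbw.ne]; ring, fun w' => ?_⟩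
  simp only [Finsupp.coe_zero, Pi.zero_apply, Finsupp.add_apply, Finsupp.smul_apply, smul_eq_mul]
  rcases lt_or_ge (b w') 0 with hneg | hnonneg
  · have := (le_div_iff₀ (neg_pos.2 hneg)).1 (hmin w' (by simp [hneg, hneg.ne]))
    linarith
  · have h := h₀ w'
    simp only [Finsupp.coe_zero, Pi.zero_apply, Finsupp.add_apply, Finsupp.smul_apply,
      smul_eq_mul] at h
    exact h.trans (by gcongr; exact ht₀ hbw)

theorem exists_isGreatest_setOf_nonneg_add_smul {t₀ : 𝕜} (h₀ : 0 ≤ a + t₀ • b) (hb : ¬ 0 ≤ b) :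
    ∃ t, IsGreatest {t : 𝕜 | 0 ≤ a + t • b} t := by
  obtain ⟨t, w, hbw, hw, ht⟩ := exists_apply_add_mul_eq_zero h₀ hb
  refine ⟨t, ht, fun t' ht' => ?_⟩
  have h : 0 ≤ a w + t' * b w := ht' w
  by_contra! hlt
  have := mul_lt_mul_of_neg_right hlt hbw
  linarith

theorem exists_pos_forall_nonneg_add_smul (ha : 0 ≤ a) (hab : ∀ w, a w = 0 → 0 ≤ b w) :
    ∃ ε > (0 : 𝕜), ∀ δ ∈ Set.Icc 0 ε, 0 ≤ a + δ • b := by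
  by_cases hb : 0 ≤ b
  · exact ⟨1, one_pos, fun δ hδ => add_nonneg ha (smul_nonneg hδ.1 hb)⟩
  obtain ⟨t, w, hbw, hw, ht⟩ := exists_apply_add_mul_eq_zero (t₀ := 0) (by simpa using ha) hb
  have haw : 0 < a w := (ha w).lt_of_ne fun h => hbw.not_ge (hab w h.symm)
  refine ⟨t, by nlinarith, fun δ hδ w' => ?_⟩
  change 0 ≤ a w' + δ * b w'
  have ha' : 0 ≤ a w' := ha w'
  have ht' : 0 ≤ a w' + t * b w' := ht w'
  rcases le_total 0 (b w') with hb' | hb'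
  · exact add_nonneg ha' (mul_nonneg hδ.1 hb')
  · exact ht'.trans (by grw [mul_le_mul_of_nonpos_right hδ.2 hb'])

end RatioTest

section GenericDirection

variable {𝕜 E : Type*} [DivisionRing 𝕜] [AddCommGroup E] [Module 𝕜 E]

theorem finrank_vectorSpan_insert_le_card (p : E) (r : Finset E) :
    Module.finrank 𝕜 (vectorSpan 𝕜 (insert p (r : Set E))) ≤ #r := by
  classical
  have h := finrank_vectorSpan_image_finset_le 𝕜 id (insert p r)
    (Nat.succ_pred_eq_of_pos (insert_nonempty p r).card_pos).symm
  rw [image_id, coe_insert] at h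
  exact h.trans (Nat.pred_le_iff.2 (card_insert_le p r))

theorem exists_forall_notMem_vectorSpan_insert [Infinite 𝕜] [FiniteDimensional 𝕜 E] (p : E)
    {P : Finset (Finset E)} (hP : ∀ r ∈ P, #r < Module.finrank 𝕜 E) :
    ∃ u : E, ∀ r ∈ P, u ∉ vectorSpan 𝕜 (insert p (r : Set E)) := by
  classical
  have htop : ⊤ ∉ P.image fun r : Finset E => vectorSpan 𝕜 (insert p (r : Set E)) := by
    intro h
    obtain ⟨r, hr, hr_top⟩ := mem_image.1 h
    have hdim := finrank_vectorSpan_insert_le_card (𝕜 := 𝕜) p r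
    rw [hr_top, finrank_top] at hdim
    exact hdim.not_gt (hP r hr)
  obtain ⟨u, hu⟩ := (Set.ne_univ_iff_exists_notMem _).1
    (Subspace.biUnion_ne_univ_of_top_notMem htop)
  exact ⟨u, fun r hr hur => hu (Set.mem_biUnion
    (mem_image_of_mem (fun r : Finset E => vectorSpan 𝕜 (insert p (r : Set E))) hr) hur)⟩

end GenericDirection

section Rays

variable {𝕜 E : Type*} [Field 𝕜] [LinearOrder 𝕜] [IsStrictOrderedRing 𝕜] [AddCommGroup E]
  [Module 𝕜 E] {s : Finset E} {a b : E →₀ 𝕜} {x u : E}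

theorem add_smul_mem_convexHull_iff (hs : AffineIndependent 𝕜 ((↑) : s → E))
    (ha : a ∈ Finsupp.supported 𝕜 𝕜 (s : Set E)) (hax : moment 𝕜 a = (x, 1))
    (hb : b ∈ Finsupp.supported 𝕜 𝕜 (s : Set E)) (hbu : moment 𝕜 b = (u, 0)) {t : 𝕜} :
    x + t • u ∈ convexHull 𝕜 (s : Set E) ↔ 0 ≤ a + t • b := by
  have hab : a + t • b ∈ Finsupp.supported 𝕜 𝕜 (s : Set E) :=
    add_mem ha (Submodule.smul_mem _ t hb)
  rw [mem_convexHull_iff_exists_moment_eq]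
  constructor
  · rintro ⟨e, he, he0, hex⟩
    rwa [← eq_of_moment_eq hs he hab (hex.trans (moment_add_smul hax hbu t).symm)]
  · exact fun h => ⟨_, hab, h, moment_add_smul hax hbu t⟩

theorem exists_pos_forall_add_smul_mem_convexHull (hs : AffineIndependent 𝕜 ((↑) : s → E))
    (ha : a ∈ Finsupp.supported 𝕜 𝕜 (s : Set E)) (ha0 : 0 ≤ a) (hax : moment 𝕜 a = (x, 1))
    (hb : b ∈ Finsupp.supported 𝕜 𝕜 (s : Set E)) (hbu : moment 𝕜 b = (u, 0))
    (hab : ∀ w ∈ s, a w = 0 → 0 ≤ b w) :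
    ∃ ε > (0 : 𝕜), ∀ δ ∈ Set.Icc 0 ε, x + δ • u ∈ convexHull 𝕜 (s : Set E) := by
  simp only [add_smul_mem_convexHull_iff hs ha hax hb hbu]
  refine exists_pos_forall_nonneg_add_smul ha0 fun w hw => ?_
  by_cases hws : w ∈ s
  · exact hab w hws hw
  · exact (Finsupp.notMem_support_iff.1 fun h => hws (hb h)).ge

theorem exists_pos_forall_add_smul_mem_convexHull_insert [DecidableEq E] {r : Finset E} {v : E}
    (hs : AffineIndependent 𝕜 ((↑) : ↥(insert v r) → E)) (har : a.support = r)
    (ha0 : 0 ≤ a) (hax : moment 𝕜 a = (x, 1))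
    (hb : b ∈ Finsupp.supported 𝕜 𝕜 (↑(insert v r) : Set E)) (hbu : moment 𝕜 b = (u, 0))
    (hbv : 0 ≤ b v) :
    ∃ ε > (0 : 𝕜), ∀ δ ∈ Set.Icc 0 ε, x + δ • u ∈ convexHull 𝕜 (↑(insert v r) : Set E) := by
  refine exists_pos_forall_add_smul_mem_convexHull hs (har.trans_subset (subset_insert v r)) ha0
    hax hb hbu fun w hw haw => ?_
  obtain rfl | hwr := mem_insert.1 hw
  · exact hbv
  · exact absurd haw (Finsupp.mem_support_iff.1 (har ▸ hwr))

theorem apply_eq_zero_of_add_smul_mem_convexHull (hs : AffineIndependent 𝕜 ((↑) : s → E))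
    (ha : a ∈ Finsupp.supported 𝕜 𝕜 (s : Set E)) (hax : moment 𝕜 a = (x, 1))
    (hb : b ∈ Finsupp.supported 𝕜 𝕜 (s : Set E)) (hbu : moment 𝕜 b = (u, 0)) {r : Finset E}
    (hrs : r ⊆ s) {v : E} (hv : v ∉ r) (hav : a v = 0) {t : 𝕜} (ht : t ≠ 0)
    (hr : x + t • u ∈ convexHull 𝕜 (r : Set E)) : b v = 0 := by
  obtain ⟨e, he, -, hex⟩ := mem_convexHull_iff_exists_moment_eq.1 hr
  have heq : e = a + t • b := eq_of_moment_eq hs (Finsupp.supported_mono (coe_subset.2 hrs) he)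
    (add_mem ha (Submodule.smul_mem _ t hb)) (hex.trans (moment_add_smul hax hbu t).symm)
  have hev : e v = 0 := Finsupp.notMem_support_iff.1 fun h => hv (he h)
  rw [heq, Finsupp.add_apply, hav, zero_add, Finsupp.smul_apply, smul_eq_mul] at hev
  exact (mul_eq_zero.1 hev).resolve_left ht

theorem eq_zero_of_moment_snd_eq_zero (hb : 0 ≤ b) (hb0 : (moment 𝕜 b).2 = 0) : b = 0 := by
  rw [moment_eq_of_mem_supported (s := b.support) fun _ => id] at hb0
  ext w
  by_contra hw
  exact hw ((sum_eq_zero_iff_of_nonneg fun w _ => hb w).1 hb0 w (Finsupp.mem_support_iff.2 hw))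

theorem exists_support_eq_and_moment_eq (hs : s.Nonempty) :
    ∃ (x : E) (a : E →₀ 𝕜), a.support = s ∧ 0 ≤ a ∧ moment 𝕜 a = (x, 1) := by
  classical
  have hcard : 0 < (#s : 𝕜) := by exact_mod_cast hs.card_pos
  let a : E →₀ 𝕜 := Finsupp.indicator s fun _ _ => (#s : 𝕜)⁻¹
  have ha {w : E} (hw : w ∈ s) : a w = (#s : 𝕜)⁻¹ := Finsupp.indicator_of_mem hw _
  have ha_supp : a.support = s := by
    refine (Finsupp.support_indicator_subset s _).antisymm fun w hw => ?_
    rw [Finsupp.mem_support_iff, ha hw]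
    exact inv_ne_zero hcard.ne'
  refine ⟨∑ w ∈ s, a w • w, a, ha_supp, fun w => ?_, ?_⟩
  · by_cases hw : w ∈ s
    · exact (inv_pos.2 hcard).le.trans_eq (ha hw).symm
    · exact (Finsupp.indicator_of_notMem hw _).ge
  · rw [moment_eq_of_mem_supported (s := s) ha_supp.subset, sum_congr rfl fun w hw => ha hw,
      sum_const, nsmul_eq_mul, mul_inv_cancel₀ hcard.ne']

variable [FiniteDimensional 𝕜 E]

theorem exists_isGreatest_setOf_add_smul_mem_convexHull (hs : AffineIndependent 𝕜 ((↑) : s → E))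
    (hcard : #s = Module.finrank 𝕜 E + 1) (hu : u ≠ 0) {t₀ : 𝕜}
    (ht₀ : x + t₀ • u ∈ convexHull 𝕜 (s : Set E)) :
    ∃ t, IsGreatest {t : 𝕜 | x + t • u ∈ convexHull 𝕜 (s : Set E)} t := by
  obtain ⟨a, ha, hax⟩ := exists_moment_eq hs hcard (x, (1 : 𝕜))
  obtain ⟨b, hb, hbu⟩ := exists_moment_eq hs hcard (u, (0 : 𝕜))
  simp only [add_smul_mem_convexHull_iff hs ha hax hb hbu] at ht₀ ⊢
  refine exists_isGreatest_setOf_nonneg_add_smul ht₀ fun hb0 => hu ?_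
  rw [eq_zero_of_moment_snd_eq_zero hb0 (by rw [hbu]), map_zero] at hbu
  exact (Prod.ext_iff.1 hbu).1.symm

theorem exists_isGreatest_setOf_add_smul_mem_biUnion {T : Finset (Finset E)}
    (hT : ∀ s ∈ T, AffineIndependent 𝕜 ((↑) : s → E) ∧ #s = Module.finrank 𝕜 E + 1) (hu : u ≠ 0)
    {t₀ : 𝕜} (ht₀ : ∃ s ∈ T, x + t₀ • u ∈ convexHull 𝕜 (s : Set E)) :
    ∃ t, IsGreatest {t : 𝕜 | ∃ s ∈ T, x + t • u ∈ convexHull 𝕜 (s : Set E)} t := by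
  classical
  let T' : Finset (Finset E) := {s ∈ T | ∃ t : 𝕜, x + t • u ∈ convexHull 𝕜 (s : Set E)}
  have hlast (s : Finset E) (hs : s ∈ T') :
      ∃ t, IsGreatest {t : 𝕜 | x + t • u ∈ convexHull 𝕜 (s : Set E)} t := by
    obtain ⟨hsT, t, ht⟩ := mem_filter.1 hs
    exact exists_isGreatest_setOf_add_smul_mem_convexHull (hT s hsT).1 (hT s hsT).2 hu ht
  choose! last hlast using hlast
  obtain ⟨s₀, hs₀, hst₀⟩ := ht₀
  obtain ⟨s, hs, hmax⟩ := T'.exists_max_image last ⟨s₀, mem_filter.2 ⟨hs₀, t₀, hst₀⟩⟩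
  refine ⟨last s, ⟨s, (mem_filter.1 hs).1, (hlast s hs).1⟩, ?_⟩
  rintro t ⟨s', hs', ht⟩
  have hs'T' : s' ∈ T' := mem_filter.2 ⟨hs', t, ht⟩
  exact ((hlast s' hs'T').2 ht).trans (hmax s' hs'T')

end Rays

section FreeFacet

variable {𝕜 E : Type*} [Field 𝕜] [LinearOrder 𝕜] [IsStrictOrderedRing 𝕜] [AddCommGroup E]
  [Module 𝕜 E] [FiniteDimensional 𝕜 E]

/-- A generic ray from inside a simplex leaves the polyhedron of `T` through the relative interior
of a facet. -/
theorem exists_last_point_on_ray (hE : 0 < Module.finrank 𝕜 E) {T : Finset (Finset E)}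
    (hT : ∀ s ∈ T, AffineIndependent 𝕜 ((↑) : s → E) ∧ #s = Module.finrank 𝕜 E + 1)
    (hne : T.Nonempty) :
    ∃ x u : E, (∃ s ∈ T, x ∈ convexHull 𝕜 (s : Set E)) ∧
      (∀ s ∈ T, ∀ r ⊆ s, #r < Module.finrank 𝕜 E → x ∉ convexHull 𝕜 (r : Set E)) ∧
      ∀ s ∈ T, ∀ ε > (0 : 𝕜), x + ε • u ∉ convexHull 𝕜 (s : Set E) := by
  classical
  obtain ⟨s₀, hs₀⟩ := hne
  obtain ⟨hind, hcard⟩ := hT s₀ hs₀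
  obtain ⟨p, a, ha, ha0, hap⟩ := exists_support_eq_and_moment_eq (𝕜 := 𝕜)
    (card_pos.1 (hcard ▸ Nat.succ_pos _) : s₀.Nonempty)
  let P : Finset (Finset E) := {r ∈ T.biUnion powerset | #r < Module.finrank 𝕜 E}
  obtain ⟨u, hu⟩ := exists_forall_notMem_vectorSpan_insert (𝕜 := 𝕜) p (P := P)
    fun r hr => (mem_filter.1 hr).2
  have mem_P {s r : Finset E} (hs : s ∈ T) (hrs : r ⊆ s) (hr : #r < Module.finrank 𝕜 E) : r ∈ P :=
    mem_filter.2 ⟨mem_biUnion.2 ⟨s, hs, mem_powerset.2 hrs⟩, hr⟩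
  have hu0 : u ≠ 0 := by
    rintro rfl
    exact hu ∅ (mem_P hs₀ (empty_subset s₀) hE) (zero_mem _)
  obtain ⟨b, hb, hbu⟩ := exists_moment_eq hind hcard (u, (0 : 𝕜))
  obtain ⟨ε, hε, hray⟩ := exists_pos_forall_add_smul_mem_convexHull hind ha.subset ha0 hap hb hbu
    fun w hw haw => absurd haw (Finsupp.mem_support_iff.1 (ha ▸ hw))
  have hεs₀ := hray ε (Set.right_mem_Icc.2 hε.le)
  obtain ⟨t, ht, hlast⟩ := exists_isGreatest_setOf_add_smul_mem_biUnion hT hu0 ⟨s₀, hs₀, hεs₀⟩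
  have ht0 : 0 < t := hε.trans_le (hlast ⟨s₀, hs₀, hεs₀⟩)
  refine ⟨p + t • u, u, ht, fun s hs r hrs hr hx => ?_, fun s hs δ hδ hx => ?_⟩
  · have hdir : (p + t • u) -ᵥ p ∈ vectorSpan 𝕜 (insert p (r : Set E)) := by
      rw [← direction_affineSpan]
      exact AffineSubspace.vsub_mem_direction
        (affineSpan_mono 𝕜 (Set.subset_insert p _) (convexHull_subset_affineSpan _ hx))
        (mem_affineSpan 𝕜 (Set.mem_insert p _))
    rw [vsub_eq_sub, add_sub_cancel_left] at hdir
    exact hu r (mem_P hs hrs hr) ((Submodule.smul_mem_iff _ ht0.ne').1 hdir)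
  · rw [add_assoc, ← add_smul] at hx
    exact (hlast ⟨s, hs, hx⟩).not_gt (lt_add_of_pos_right t hδ)

variable {X : Geometry.SimplicialComplex 𝕜 E} {r : Finset E} {v v' x : E}

/-- The simplices on the two sides of a facet cover a neighbourhood of each of its relatively
interior points: a direction pointing out of both has an opposite pointing into both, which the
intersection condition for faces forbids. -/
theorem exists_pos_add_smul_mem_convexHull_insert_or [DecidableEq E]
    (hr : #r = Module.finrank 𝕜 E) (hv : v ∉ r) (hv' : v' ∉ r) (hvv' : v ≠ v')
    (hX : insert v r ∈ X.faces) (hX' : insert v' r ∈ X.faces)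
    {a : E →₀ 𝕜} (har : a.support = r) (ha0 : 0 ≤ a) (hax : moment 𝕜 a = (x, 1)) (u : E) :
    ∃ ε > (0 : 𝕜), x + ε • u ∈ convexHull 𝕜 (↑(insert v r) : Set E) ∨
      x + ε • u ∈ convexHull 𝕜 (↑(insert v' r) : Set E) := by
  obtain ⟨b, hb, hbu⟩ := exists_moment_eq (X.indep hX)
    (by rw [card_insert_of_notMem hv, hr]) (u, (0 : 𝕜))
  obtain ⟨b', hb', hbu'⟩ := exists_moment_eq (X.indep hX')
    (by rw [card_insert_of_notMem hv', hr]) (u, (0 : 𝕜))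
  by_cases hbv : 0 ≤ b v
  · obtain ⟨ε, hε, h⟩ := exists_pos_forall_add_smul_mem_convexHull_insert (X.indep hX) har ha0 hax
      hb hbu hbv
    exact ⟨ε, hε, .inl (h ε (Set.right_mem_Icc.2 hε.le))⟩
  by_cases hbv' : 0 ≤ b' v'
  · obtain ⟨ε, hε, h⟩ := exists_pos_forall_add_smul_mem_convexHull_insert (X.indep hX') har ha0
      hax hb' hbu' hbv'
    exact ⟨ε, hε, .inr (h ε (Set.right_mem_Icc.2 hε.le))⟩
  rw [not_le] at hbv hbv'
  have hneg : moment 𝕜 (-b) = (-u, 0) := by rw [map_neg, hbu, Prod.neg_mk, neg_zero]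
  have hneg' : moment 𝕜 (-b') = (-u, 0) := by rw [map_neg, hbu', Prod.neg_mk, neg_zero]
  obtain ⟨ε, hε, h⟩ := exists_pos_forall_add_smul_mem_convexHull_insert (X.indep hX) har ha0 hax
    (neg_mem hb) hneg (neg_pos.2 hbv).le
  obtain ⟨ε', hε', h'⟩ := exists_pos_forall_add_smul_mem_convexHull_insert (X.indep hX') har ha0
    hax (neg_mem hb') hneg' (neg_pos.2 hbv').le
  have hδ : 0 < min ε ε' := lt_min hε hε'
  have hmem := X.inter_subset_convexHull hX hX'
    ⟨h _ ⟨hδ.le, min_le_left ε ε'⟩, h' _ ⟨hδ.le, min_le_right ε ε'⟩⟩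
  have hinter : insert v r ∩ insert v' r = r := by grind
  rw [← coe_inter, hinter] at hmem
  have hbv0 := apply_eq_zero_of_add_smul_mem_convexHull (X.indep hX)
    (har.trans_subset (subset_insert v r)) hax (neg_mem hb) hneg (subset_insert v r) hv
    (Finsupp.notMem_support_iff.1 (har ▸ hv)) hδ.ne' hmem
  exact absurd (neg_eq_zero.1 hbv0) hbv.ne

theorem exists_support_eq_erase [DecidableEq E] {s : Finset E}
    (hs : AffineIndependent 𝕜 ((↑) : s → E)) (hcard : #s = Module.finrank 𝕜 E + 1) {u : E}
    (hx : x ∈ convexHull 𝕜 (s : Set E))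
    (hx_skel : ∀ r ⊆ s, #r < Module.finrank 𝕜 E → x ∉ convexHull 𝕜 (r : Set E))
    (hout : ∀ ε > (0 : 𝕜), x + ε • u ∉ convexHull 𝕜 (s : Set E)) :
    ∃ v ∈ s, ∃ a : E →₀ 𝕜, a.support = s.erase v ∧ 0 ≤ a ∧ moment 𝕜 a = (x, 1) := by
  obtain ⟨a, ha, ha0, hax⟩ := mem_convexHull_iff_exists_moment_eq.1 hx
  obtain ⟨b, hb, hbu⟩ := exists_moment_eq hs hcard (u, (0 : 𝕜))
  have hne : a.support ≠ s := by
    intro heq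
    obtain ⟨ε, hε, hray⟩ := exists_pos_forall_add_smul_mem_convexHull hs ha ha0 hax hb hbu
      fun w hw haw => absurd haw (Finsupp.mem_support_iff.1 (heq ▸ hw))
    exact hout ε hε (hray ε (Set.right_mem_Icc.2 hε.le))
  have hge : Module.finrank 𝕜 E ≤ #a.support := by
    by_contra! hlt
    exact hx_skel a.support (coe_subset.1 ha) hlt
      (mem_convexHull_iff_exists_moment_eq.2 ⟨a, fun _ => id, ha0, hax⟩)
  have hlt : #a.support < #s := card_lt_card ((coe_subset.1 ha).ssubset_of_ne hne)
  obtain ⟨v, hv, hvs⟩ := exists_eq_insert_iff.2 ⟨coe_subset.1 ha, by omega⟩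
  exact ⟨v, hvs ▸ mem_insert_self v _, a, by rw [← hvs, erase_insert hv], ha0, hax⟩

theorem exists_free_facet [DecidableEq E] {T : Finset (Finset E)} (hT : T.Nonempty)
    (hTX : ∀ s ∈ T, s ∈ X.faces ∧ #s = Module.finrank 𝕜 E + 1) :
    ∃ s ∈ T, ∃ v ∈ s, ∀ s' ∈ T, s.erase v ⊆ s' → s' = s := by
  have hTind (s : Finset E) (hs : s ∈ T) :
      AffineIndependent 𝕜 ((↑) : s → E) ∧ #s = Module.finrank 𝕜 E + 1 :=
    ⟨X.indep (hTX s hs).1, (hTX s hs).2⟩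
  have hTne {s : Finset E} (hs : s ∈ T) : s.Nonempty := card_pos.1 ((hTX s hs).2 ▸ Nat.succ_pos _)
  rcases (Module.finrank 𝕜 E).eq_zero_or_pos with hE | hE
  · have := Module.finrank_zero_iff.1 hE
    obtain ⟨s, hs⟩ := hT
    obtain ⟨v, hv⟩ := hTne hs
    refine ⟨s, hs, v, hv, fun s' hs' _ => ?_⟩
    rw [← coe_inj, (coe_nonempty.2 (hTne hs')).eq_univ, (coe_nonempty.2 (hTne hs)).eq_univ]
  obtain ⟨x, u, ⟨s, hs, hxs⟩, hskel, hout⟩ := exists_last_point_on_ray hE hTind hT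
  obtain ⟨v, hv, a, ha, ha0, hax⟩ :=
    exists_support_eq_erase (hTind s hs).1 (hTind s hs).2 hxs (hskel s hs) (hout s hs)
  refine ⟨s, hs, v, hv, fun s' hs' hsub => ?_⟩
  have hr : #(s.erase v) = Module.finrank 𝕜 E := by
    rw [card_erase_of_mem hv, (hTX s hs).2, Nat.add_sub_cancel]
  obtain ⟨v', hv', rfl⟩ := exists_eq_insert_iff.2 ⟨hsub, by rw [hr, (hTX s' hs').2]⟩
  by_contra hne
  have hvs : insert v (s.erase v) = s := insert_erase hv
  have hvv' : v ≠ v' := by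
    rintro rfl
    exact hne hvs
  obtain ⟨ε, hε, hmem⟩ := exists_pos_add_smul_mem_convexHull_insert_or hr (notMem_erase v s)
    hv' hvv' (hvs.symm ▸ (hTX s hs).1) (hTX _ hs').1 ha ha0 hax u
  rw [hvs] at hmem
  exact hmem.elim (hout s hs ε hε) (hout _ hs' ε hε)

end FreeFacet

theorem eq_zero_of_augBdry_eq_zero_of_finrank_lt {A 𝕜 E : Type*} [AddCommGroup A] [Field 𝕜]
    [LinearOrder 𝕜] [IsStrictOrderedRing 𝕜] [AddCommGroup E] [Module 𝕜 E] [FiniteDimensional 𝕜 E]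
    [LinearOrder E] {X : Geometry.SimplicialComplex 𝕜 E} {n : ℕ} (hn : Module.finrank 𝕜 E < n)
    {c : Finset E →₀ A} (hc : c ∈ augChains A (augFaces X.faces) n) (hc0 : augBdry c = 0) :
    c = 0 := by
  by_contra hne
  have hfaces (s : Finset E) (hs : s ∈ c.support) :
      s ∈ X.faces ∧ #s = Module.finrank 𝕜 E + 1 := by
    obtain ⟨hsX, hcard⟩ := hc hs
    have hsX := mem_of_mem_augFaces hsX (card_pos.1 (hcard ▸ hn.pos))
    have hle := (X.indep hsX).card_le_finrank_succ
    have := Submodule.finrank_le (vectorSpan 𝕜 (Set.range ((↑) : s → E)))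
    rw [Fintype.card_coe] at hle
    exact ⟨hsX, by omega⟩
  obtain ⟨s, hs, v, hv, hfree⟩ := exists_free_facet (Finsupp.support_nonempty_iff.2 hne) hfaces
  exact Finsupp.mem_support_iff.1 hs (eq_zero_of_augBdry_eq_zero_of_free hc0 hv hfree)

theorem topological_helly_general {𝕜 E : Type*} [Field 𝕜] [LinearOrder 𝕜] [IsStrictOrderedRing 𝕜]
    [AddCommGroup E] [Module 𝕜 E] [FiniteDimensional 𝕜 E] [LinearOrder E] {d : ℕ}
    (hd : Module.finrank 𝕜 E ≤ d) (R A : Type*) [CommRing R] [AddCommGroup A] [Module R A]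
    [Nontrivial A] {ι : Type*} [Fintype ι] (hcard : d + 1 ≤ Fintype.card ι)
    (X : Geometry.SimplicialComplex 𝕜 E) (Γ : ι → Set (Finset E))
    (hΓ : ∀ i, IsComplex (Γ i) ∧ Γ i ⊆ X.faces)
    (h : ∀ Γ' : Finset ι, 1 ≤ #Γ' → #Γ' ≤ d + 1 →
      RedHVanish R A E (⋂ i ∈ Γ', Γ i) ((d : ℤ) - #Γ')) :
    (⋂ i, Γ i).Nonempty := by
  have htop (n : ℕ) (hn : n > d) (c) (hc : c ∈ augChains A (augFaces X.faces) n)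
      (hc0 : augBdry c = 0) : c = 0 :=
    eq_zero_of_augBdry_eq_zero_of_finrank_lt (hd.trans_lt hn) hc hc0
  have hacyclic (J : Finset ι) (hJ : J.Nonempty) (n : ℕ) (hn : n + #J = d + 1) :
      AugAcyclic A (J.inf fun i => augFaces (Γ i)) n := by
    rw [inf_augFaces]
    refine (IsComplex.biInter (fun i => (hΓ i).1) hJ).augAcyclic_of_redHVanish R ?_
    rw [show (n : ℤ) - 1 = d - #J by omega]
    exact h J hJ.card_pos (by omega)
  have huniv : (univ : Finset ι).Nonempty := card_pos.1 (by rw [card_univ]; omega)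
  have hzero := augAcyclic_inf_of_lt_add_card htop (fun i => augFaces_mono (hΓ i).2) hacyclic
    huniv (n := 0) (by rw [card_univ]; omega)
  rw [inf_augFaces] at hzero
  simpa using nonempty_of_augAcyclic_zero hzero

/-- Topological Helly theorem: for a simplicial complex embedded in `ℝ^d` and at least
`d+2` subcomplexes, vanishing of `H̃_{d-|Γ'|}(⋂Γ')` for all subcollections of size
`≤ d+1` forces a common face. -/
theorem topological_helly (d : ℕ) [LinearOrder (EuclideanSpace ℝ (Fin d))]
    (F : Type*) [Field F] {ι : Type*} [Fintype ι]
    (hcard : d + 2 ≤ Fintype.card ι)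
    (X : Geometry.SimplicialComplex ℝ (EuclideanSpace ℝ (Fin d)))
    (Γ : ι → Set (Finset (EuclideanSpace ℝ (Fin d))))
    (hΓ : ∀ i, IsComplex (Γ i) ∧ Γ i ⊆ X.faces)
    (h : ∀ Γ' : Finset ι, 1 ≤ Γ'.card → Γ'.card ≤ d + 1 →
      RedHVanish F F (EuclideanSpace ℝ (Fin d)) (⋂ i ∈ Γ', Γ i)
        ((d : ℤ) - Γ'.card)) :
    (⋂ i, Γ i).Nonempty :=
  topological_helly_general finrank_euclideanSpace_fin.le F F (by omega) X Γ hΓ h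
end

section
/- Let K be a simplicial complex whose vertex set is partitioned into m+1 nonempty parts V_0, …, V_m, and F a field. For S ⊆ {0,…,m}, let K_S denote the subcomplex induced by ⋃_{i∈S} V_i. If H̃_{|S|-2}(K_S, F) = 0 for every nonempty S ⊆ {0,…,m}, then K contains a rainbow simplex, i.e., a simplex with exactly one vertex in each V_i. -/
/-!
Regard `S ↦ K_S` as a carrier from the simplex `Δ` on the colours to `K`. The vanishing of
`H̃_{|S|-2}(K_S)` lets one fill boundaries skeleton by skeleton, so there is an augmented chain map
`g` from `Δ` to `K` with `g S` a chain of `K_S`. Colouring the vertices leads back to `Δ`, and the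
composite preserves each face and is nonzero on the empty simplex, so each `g S` has nonzero
degree over `S`; a simplex of `g univ` that hits all colours is rainbow.

To avoid orienting rainbow simplices, having degree zero over `S` is expressed by a submodule,
spanned by chains missing a colour of `S` and the boundaries of `S`-coloured chains. If
`g (insert i S)` lay in this submodule for `insert i S`, then discarding from its boundary the
simplices with a vertex of colour `i` would put `± g S` in the one for `S`; for `S = ∅` the
submodule is zero.
-/

open Finset

variable (R : Type*) [CommRing R] (A : Type*) [AddCommGroup A] [Module R A]
variable (V : Type*) [LinearOrder V]

namespace HomologicalSperner

section AugmentedChains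

variable {R : Type*} [CommRing R] {A : Type*} [AddCommGroup A] [Module R A] {V : Type*}

variable (R A) in
/-- The augmented chains of the complex `L` on simplices with `k` vertices, that is, in degree
`k - 1`; the empty simplex is always admitted. -/
def augChains (L : Set (Finset V)) (k : ℕ) : Submodule R (Finset V →₀ A) :=
  Finsupp.supported A R {s | s ∈ insert ∅ L ∧ s.card = k}

theorem augChains_mono {L L' : Set (Finset V)} (h : L ⊆ L') (k : ℕ) :
    augChains R A L k ≤ augChains R A L' k :=
  Finsupp.supported_mono fun _ hs => ⟨Set.insert_subset_insert h hs.1, hs.2⟩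

theorem single_empty_mem_augChains (L : Set (Finset V)) (a : A) :
    Finsupp.single ∅ a ∈ augChains R A L 0 :=
  Finsupp.single_mem_supported R a ⟨Set.mem_insert _ _, card_empty⟩

theorem eq_single_empty_of_mem_augChains_zero {L : Set (Finset V)} {x : Finset V →₀ A}
    (hx : x ∈ augChains R A L 0) : x = Finsupp.single ∅ (x ∅) :=
  Finsupp.support_subset_singleton.1 fun _ hs =>
    mem_singleton.2 (card_eq_zero.1 (hx hs).2)

end AugmentedChains

section AugmentedBoundary

/-- The incidence sign of the facet `s.erase v` in `s`, as it occurs in `bdry`. -/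
def faceSign {V : Type*} [LinearOrder V] (s : Finset V) (v : V) : ℤ :=
  (-1) ^ (s.filter (fun w => w < v)).card

variable {R : Type*} [CommRing R] {A : Type*} [AddCommGroup A] [Module R A]
variable {V : Type*} [LinearOrder V]

theorem faceSign_erase_of_lt {s : Finset V} {v w : V} (hv : v ∈ s) (hvw : v < w) :
    faceSign (s.erase v) w = -faceSign s w := by
  have hmem : v ∈ s.filter (fun u => u < w) := mem_filter.2 ⟨hv, hvw⟩
  rw [faceSign, faceSign, filter_erase, ← card_erase_add_one hmem, pow_succ]
  ring

theorem faceSign_erase_of_gt (s : Finset V) {v w : V} (hvw : v < w) :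
    faceSign (s.erase w) v = faceSign s v := by
  rw [faceSign, faceSign, filter_erase, erase_eq_of_notMem]
  simp [hvw.le]

theorem faceSign_singleton (v : V) : faceSign {v} v = 1 := by
  simp [faceSign, filter_singleton]

theorem faceSign_mul_faceSign_erase {s : Finset V} {v w : V} (hv : v ∈ s) (hw : w ∈ s)
    (hvw : v ≠ w) :
    faceSign s v * faceSign (s.erase v) w = -(faceSign s w * faceSign (s.erase w) v) := by
  rcases lt_or_gt_of_ne hvw with h | h
  · rw [faceSign_erase_of_lt hv h, faceSign_erase_of_gt s h]; ring
  · rw [faceSign_erase_of_lt hw h, faceSign_erase_of_gt s h]; ring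

theorem faceSign_smul_mem_iff {M : Type*} [AddCommGroup M] [Module R M] (N : Submodule R M)
    (s : Finset V) (v : V) {x : M} : faceSign s v • x ∈ N ↔ x ∈ N := by
  rcases neg_one_pow_eq_or ℤ (s.filter (fun w => w < v)).card with h | h <;>
    simp [faceSign, h]

theorem sum_faceSign_smul_sum_faceSign_smul {M : Type*} [AddCommGroup M] (s : Finset V)
    (g : Finset V → M) :
    ∑ v ∈ s, faceSign s v • ∑ w ∈ s.erase v,
      faceSign (s.erase v) w • g ((s.erase v).erase w) = 0 := by
  simp_rw [smul_sum, smul_smul]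
  rw [sum_sigma']
  refine sum_involution (fun p _ => ⟨p.2, p.1⟩) ?_ ?_ ?_ fun _ _ => rfl
  · rintro ⟨v, w⟩ hp
    obtain ⟨hv, hwv, hw⟩ : v ∈ s ∧ w ≠ v ∧ w ∈ s := by simpa using hp
    simp only
    rw [faceSign_mul_faceSign_erase hv hw hwv.symm, erase_right_comm, neg_smul, neg_add_cancel]
  · rintro ⟨v, w⟩ hp - heq
    simp_all
  · rintro ⟨v, w⟩ hp
    simp_all [eq_comm]

variable (R A V) in
/-- The boundary map of the augmented chain complex of the full simplex on `V`, with all degrees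
put into one module. The empty simplex spans degree `-1`, so that the augmentation `aug` becomes
an instance of the boundary formula. -/
noncomputable def augBdry : (Finset V →₀ A) →ₗ[R] (Finset V →₀ A) :=
  Finsupp.lsum R fun s => ∑ v ∈ s, faceSign s v • Finsupp.lsingle (R := R) (s.erase v)

theorem augBdry_single (s : Finset V) (a : A) :
    augBdry R A V (Finsupp.single s a) =
      ∑ v ∈ s, faceSign s v • Finsupp.single (s.erase v) a := by
  simp [augBdry]

theorem augBdry_single_singleton (v : V) (a : A) :
    augBdry R A V (Finsupp.single {v} a) = Finsupp.single ∅ a := by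
  rw [augBdry_single, sum_singleton, faceSign_singleton, one_smul, erase_singleton]

theorem augBdry_augBdry (x : Finset V →₀ A) : augBdry R A V (augBdry R A V x) = 0 := by
  induction x using Finsupp.induction_linear with
  | zero => simp only [map_zero]
  | add x y hx hy => simp only [map_add, hx, hy, add_zero]
  | single s a =>
    simp only [augBdry_single, map_sum, map_zsmul]
    exact sum_faceSign_smul_sum_faceSign_smul s fun t => Finsupp.single t a

theorem map_augBdry_supported_le {T U : Set (Finset V)}
    (h : ∀ s ∈ T, ∀ v ∈ s, s.erase v ∈ U) :
    (Finsupp.supported A R T).map (augBdry R A V) ≤ Finsupp.supported A R U := by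
  rintro _ ⟨x, hx, rfl⟩
  rw [← x.sum_single, Finsupp.sum, map_sum]
  refine Submodule.sum_mem _ fun s hs => ?_
  rw [augBdry_single]
  exact Submodule.sum_mem _ fun v hv => (faceSign_smul_mem_iff _ s v).2 <|
    Finsupp.single_mem_supported R _ (h s (hx hs) v hv)

variable (R A V) in
/-- The inclusion of the `n`-chains into the module of all augmented chains. -/
noncomputable def toAug (n : ℕ) : Chains A V n →ₗ[R] (Finset V →₀ A) :=
  Finsupp.lmapDomain A R Subtype.val

theorem toAug_single (n : ℕ) (s : {s : Finset V // s.card = n + 1}) (a : A) :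
    toAug R A V n (Finsupp.single s a) = Finsupp.single s.1 a :=
  Finsupp.mapDomain_single

theorem toAug_injective (n : ℕ) : Function.Injective (toAug R A V n) :=
  Finsupp.mapDomain_injective Subtype.val_injective

theorem augBdry_toAug_succ (n : ℕ) (x : Chains A V (n + 1)) :
    augBdry R A V (toAug R A V (n + 1) x) = toAug R A V n (bdry R A V n x) := by
  induction x using Finsupp.induction_linear with
  | zero => simp only [map_zero]
  | add x y hx hy => simp only [map_add, hx, hy]
  | single s a =>
    rw [toAug_single, augBdry_single, bdry, Finsupp.lsum_single, LinearMap.sum_apply, map_sum,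
      ← sum_attach]
    refine sum_congr rfl fun v _ => ?_
    rw [LinearMap.smul_apply, map_zsmul, Finsupp.lsingle_apply, toAug_single, faceSign]

theorem augBdry_toAug_zero (x : Chains A V 0) :
    augBdry R A V (toAug R A V 0 x) = Finsupp.single ∅ (aug R A V x) := by
  induction x using Finsupp.induction_linear with
  | zero => simp only [map_zero, Finsupp.single_zero]
  | add x y hx hy => simp only [map_add, hx, hy, Finsupp.single_add]
  | single s a =>
    obtain ⟨s, hs⟩ := s
    obtain ⟨v, rfl⟩ := card_eq_one.1 hs
    rw [toAug_single, augBdry_single_singleton, aug, Finsupp.lsum_single, LinearMap.id_apply]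

theorem mem_cycles_iff_augBdry_toAug (n : ℕ) (x : Chains A V n) :
    x ∈ cycles R A V n ↔ augBdry R A V (toAug R A V n x) = 0 := by
  cases n with
  | zero => rw [cycles, LinearMap.mem_ker, augBdry_toAug_zero, Finsupp.single_eq_zero]
  | succ n =>
    rw [cycles, LinearMap.mem_ker, augBdry_toAug_succ, map_eq_zero_iff _ (toAug_injective n)]

theorem map_toAug_chainsIn (L : Set (Finset V)) (n : ℕ) :
    (chainsIn R A V L n).map (toAug R A V n) = augChains R A L (n + 1) := by
  rw [chainsIn, toAug, Finsupp.lmapDomain_supported, augChains]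
  congr 1
  ext s
  constructor
  · rintro ⟨s, hs, rfl⟩
    exact ⟨Or.inr hs, s.2⟩
  · rintro ⟨rfl | hs, hcard⟩
    · simp at hcard
    · exact ⟨⟨s, hcard⟩, hs, rfl⟩

end AugmentedBoundary

section Acyclicity

variable {R : Type*} [CommRing R] {A : Type*} [AddCommGroup A] [Module R A]
variable {V : Type*} [LinearOrder V] {L : Set (Finset V)}

theorem cyclesIn_le_boundariesIn {n : ℕ} (h : RedHVanish R A V L n) :
    cyclesIn R A V L n ≤ boundariesIn R A V L n := by
  rw [RedHVanish, if_neg (by lia), if_neg (by lia), Int.toNat_natCast,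
    Submodule.Quotient.subsingleton_iff] at h
  exact Submodule.comap_subtype_eq_top.1 h

theorem augChains_zero_le_map_augBdry (hL : IsComplex L) (hne : L.Nonempty) :
    augChains R A L 0 ≤ (augChains R A L 1).map (augBdry R A V) := by
  obtain ⟨s, hs⟩ := hne
  obtain ⟨v, hv⟩ := hL.1 s hs
  have hvL : {v} ∈ L := hL.2 s hs {v} (singleton_subset_iff.2 hv) (singleton_nonempty v)
  intro x hx
  refine ⟨Finsupp.single {v} (x ∅),
    Finsupp.single_mem_supported R _ ⟨Or.inr hvL, card_singleton v⟩, ?_⟩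
  rw [augBdry_single_singleton, ← eq_single_empty_of_mem_augChains_zero hx]

theorem augChains_inf_ker_le_map_augBdry (hL : IsComplex L) {k : ℕ}
    (h : RedHVanish R A V L (k - 1)) :
    augChains R A L k ⊓ LinearMap.ker (augBdry R A V) ≤
      (augChains R A L (k + 1)).map (augBdry R A V) := by
  cases k with
  | zero =>
    have hne : L.Nonempty := by simpa [RedHVanish] using h
    exact inf_le_left.trans (augChains_zero_le_map_augBdry hL hne)
  | succ n =>
    rw [Nat.cast_succ, add_sub_cancel_right] at h
    rintro x ⟨hx, hcycle⟩
    rw [SetLike.mem_coe, ← map_toAug_chainsIn] at hx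
    obtain ⟨y, hy, rfl⟩ := hx
    obtain ⟨z, hz, rfl⟩ :=
      cyclesIn_le_boundariesIn h ⟨(mem_cycles_iff_augBdry_toAug n y).2 hcycle, hy⟩
    refine ⟨toAug R A V (n + 1) z, ?_, augBdry_toAug_succ n z⟩
    rw [SetLike.mem_coe, ← map_toAug_chainsIn]
    exact Submodule.mem_map_of_mem hz

end Acyclicity

section AcyclicCarriers

variable {R : Type*} [CommRing R] {I : Type*} [LinearOrder I]
variable {M : Type*} [AddCommGroup M] [Module R M]

/-- `g` is a chain map from the augmented chain complex of the full simplex on `I` to `(M, D)`,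
given by its values on the simplices. -/
def IsSimplexChainMap (D : M →ₗ[R] M) (g : Finset I → M) : Prop :=
  ∀ S, D (g S) = ∑ i ∈ S, faceSign S i • g (S.erase i)

/-- The family built from the value `x₀` on the empty simplex by filling in the boundary of each
simplex `S` with the operation `fill S`. -/
noncomputable def fillSkeleta (fill : Finset I → M → M) (x₀ : M) (S : Finset I) : M :=
  if S = ∅ then x₀
  else fill S (∑ i : S, faceSign S i.1 • fillSkeleta fill x₀ (S.erase i.1))
termination_by S.card
decreasing_by exact card_erase_lt_of_mem i.2

theorem fillSkeleta_empty (fill : Finset I → M → M) (x₀ : M) : fillSkeleta fill x₀ ∅ = x₀ := by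
  rw [fillSkeleta, if_pos rfl]

theorem fillSkeleta_of_nonempty (fill : Finset I → M → M) (x₀ : M) {S : Finset I}
    (hS : S.Nonempty) :
    fillSkeleta fill x₀ S =
      fill S (∑ i ∈ S, faceSign S i • fillSkeleta fill x₀ (S.erase i)) := by
  rw [fillSkeleta, if_neg hS.ne_empty,
    sum_coe_sort S fun i => faceSign S i • fillSkeleta fill x₀ (S.erase i)]

theorem exists_isSimplexChainMap_of_acyclic_carrier (D : M →ₗ[R] M)
    (C : Finset I → Submodule R M) {x₀ : M} (hx₀ : x₀ ∈ C ∅) (hDx₀ : D x₀ = 0)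
    (hC : ∀ S, S.Nonempty → (⨆ i ∈ S, C (S.erase i)) ⊓ LinearMap.ker D ≤ (C S).map D) :
    ∃ g : Finset I → M, IsSimplexChainMap D g ∧ g ∅ = x₀ ∧ ∀ S, g S ∈ C S := by
  have hfill : ∀ S : Finset I, ∀ x, S.Nonempty → x ∈ ⨆ i ∈ S, C (S.erase i) → D x = 0 →
      ∃ y ∈ C S, D y = x := fun S _ hS hx hDx => hC S hS ⟨hx, hDx⟩
  choose! fill hfillC hDfill using hfill
  let g := fillSkeleta fill x₀
  suffices hg : ∀ S, g S ∈ C S ∧ D (g S) = ∑ i ∈ S, faceSign S i • g (S.erase i) from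
    ⟨g, fun S => (hg S).2, fillSkeleta_empty fill x₀, fun S => (hg S).1⟩
  intro S
  induction S using Finset.strongInduction with | H S ih =>
  rcases S.eq_empty_or_nonempty with rfl | hS
  · simp [g, fillSkeleta_empty, hx₀, hDx₀]
  have hmem : ∑ i ∈ S, faceSign S i • g (S.erase i) ∈ ⨆ i ∈ S, C (S.erase i) :=
    Submodule.sum_mem _ fun i hi => (faceSign_smul_mem_iff _ S i).2 <|
      Submodule.mem_iSup_of_mem i <| Submodule.mem_iSup_of_mem hi (ih _ (erase_ssubset hi)).1
  have hcycle : D (∑ i ∈ S, faceSign S i • g (S.erase i)) = 0 := by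
    rw [map_sum, ← sum_faceSign_smul_sum_faceSign_smul S g]
    refine sum_congr rfl fun i hi => ?_
    rw [map_zsmul, (ih _ (erase_ssubset hi)).2]
  rw [show g S = _ from fillSkeleta_of_nonempty fill x₀ hS]
  exact ⟨hfillC S _ hS hmem hcycle, hDfill S _ hS hmem hcycle⟩

end AcyclicCarriers

section ColoredChains

variable {R : Type*} [CommRing R] {A : Type*} [AddCommGroup A] [Module R A]
variable {V : Type*} {I : Type*}

variable (R A) in
/-- The augmented chains on simplices all of whose colours lie in `S`. -/
def coloredChains [DecidableEq I] (c : V → I) (S : Finset I) : Submodule R (Finset V →₀ A) :=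
  Finsupp.supported A R {s | s.image c ⊆ S}

variable [LinearOrder V]

variable (R A) in
/-- The chains with colours in `S` that count as zero for the degree over the simplex `S`: those
whose simplices each miss a colour of `S`, and the boundaries. -/
noncomputable def degenerateChains [DecidableEq I] (c : V → I) (S : Finset I) :
    Submodule R (Finset V →₀ A) :=
  Finsupp.supported A R {s | s.image c ⊂ S} ⊔ (coloredChains R A c S).map (augBdry R A V)

theorem supported_le_degenerateChains [DecidableEq I] (c : V → I) (S : Finset I) :
    Finsupp.supported A R {s | s.image c ⊂ S} ≤ degenerateChains R A c S :=
  le_sup_left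

theorem degenerateChains_empty [DecidableEq I] (c : V → I) : degenerateChains R A c ∅ = ⊥ := by
  have hbdry : (coloredChains R A c ∅).map (augBdry R A V) ≤ Finsupp.supported A R ∅ :=
    map_augBdry_supported_le fun s hs v hv => by simp_all
  rw [Finsupp.supported_empty, le_bot_iff] at hbdry
  simp [degenerateChains, hbdry, not_ssubset_empty]

theorem degenerateChains_le_coloredChains [DecidableEq I] (c : V → I) (S : Finset I) :
    degenerateChains R A c S ≤ coloredChains R A c S :=
  sup_le (Finsupp.supported_mono fun _ hs => hs.1) <| map_augBdry_supported_le fun _ hs _ _ =>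
    (image_subset_image (erase_subset _ _)).trans hs

theorem ssubset_or_mem_of_subset_insert [DecidableEq I] {S T : Finset I} {i j : I}
    (hT : T ⊆ insert i S) (hj : j ∈ S) (hjT : j ∉ T) : T ⊂ S ∨ i ∈ T := by
  by_cases hi : i ∈ T
  · exact Or.inr hi
  · exact Or.inl ⟨(subset_insert_iff_of_notMem hi).1 hT, fun h => hjT (h hj)⟩

theorem supported_ssubset_or_mem_le [DecidableEq I] (c : V → I) (S : Finset I) (i : I) :
    Finsupp.supported A R {s | s.image c ⊂ S ∨ i ∈ s.image c} ≤
      degenerateChains R A c S ⊔ Finsupp.supported A R {s | i ∈ s.image c} := by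
  rw [Set.ofPred_or, Finsupp.supported_union]
  exact sup_le_sup_right (supported_le_degenerateChains c S) _

theorem map_augBdry_supported_ssubset_insert_le [DecidableEq I] (c : V → I) (S : Finset I)
    (i : I) :
    (Finsupp.supported A R {s | s.image c ⊂ insert i S}).map (augBdry R A V) ≤
      degenerateChains R A c S ⊔ Finsupp.supported A R {s | i ∈ s.image c} := by
  have hsplit : Finsupp.supported A R {s | s.image c ⊂ insert i S} ≤
      coloredChains R A c S ⊔
        Finsupp.supported A R {s | i ∈ s.image c ∧ s.image c ⊂ insert i S} := by
    rw [coloredChains, ← Finsupp.supported_union]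
    refine Finsupp.supported_mono fun s hs => ?_
    by_cases hi : i ∈ s.image c
    · exact Or.inr ⟨hi, hs⟩
    · exact Or.inl ((subset_insert_iff_of_notMem hi).1 hs.1)
  have hmissing : (Finsupp.supported A R {s | i ∈ s.image c ∧ s.image c ⊂ insert i S}).map
      (augBdry R A V) ≤ Finsupp.supported A R {s | s.image c ⊂ S ∨ i ∈ s.image c} := by
    refine map_augBdry_supported_le ?_
    rintro s ⟨hi, hs⟩ v -
    have hface : (s.erase v).image c ⊆ s.image c := image_subset_image (erase_subset _ _)
    obtain ⟨j, hj, hjs⟩ := exists_of_ssubset hs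
    have hjS : j ∈ S := (mem_insert.1 hj).resolve_left fun h => hjs (h ▸ hi)
    exact ssubset_or_mem_of_subset_insert (hface.trans hs.1) hjS fun h => hjs (hface h)
  refine (Submodule.map_mono hsplit).trans ?_
  rw [Submodule.map_sup]
  exact sup_le (le_sup_right.trans le_sup_left)
    (hmissing.trans (supported_ssubset_or_mem_le c S i))

theorem map_augBdry_degenerateChains_insert_le [DecidableEq I] (c : V → I) (S : Finset I)
    (i : I) :
    (degenerateChains R A c (insert i S)).map (augBdry R A V) ≤
      degenerateChains R A c S ⊔ Finsupp.supported A R {s | i ∈ s.image c} := by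
  rw [degenerateChains, Submodule.map_sup]
  refine sup_le (map_augBdry_supported_ssubset_insert_le c S i) ?_
  rintro _ ⟨_, ⟨x, -, rfl⟩, rfl⟩
  rw [augBdry_augBdry]
  exact zero_mem _

theorem mem_degenerateChains_of_mem_sup [DecidableEq I] {c : V → I} {S : Finset I} {i : I}
    (hi : i ∉ S) {x : Finset V →₀ A} (hx : x ∈ coloredChains R A c S)
    (hsup : x ∈ degenerateChains R A c S ⊔ Finsupp.supported A R {s | i ∈ s.image c}) :
    x ∈ degenerateChains R A c S := by
  have hdisj : Disjoint {s : Finset V | i ∈ s.image c} {s | s.image c ⊆ S} :=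
    Set.disjoint_left.2 fun _ his hs => hi (hs his)
  have hmod := (sup_inf_assoc_of_le (Finsupp.supported A R {s : Finset V | i ∈ s.image c})
    (degenerateChains_le_coloredChains c S)).le ⟨hsup, hx⟩
  rwa [coloredChains, (Finsupp.disjoint_supported_supported hdisj).eq_bot, sup_bot_eq] at hmod

theorem mem_degenerateChains_sup_of_erase [DecidableEq I] {c : V → I} {S : Finset I} {i j : I}
    (hj : j ∈ S) {x : Finset V →₀ A} (hx : x ∈ coloredChains R A c ((insert i S).erase j)) :
    x ∈ degenerateChains R A c S ⊔ Finsupp.supported A R {s | i ∈ s.image c} := by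
  refine supported_ssubset_or_mem_le c S i (Finsupp.supported_mono (fun s hs => ?_) hx)
  obtain ⟨hsub, hjs⟩ := subset_erase.1 hs
  exact ssubset_or_mem_of_subset_insert hsub hj hjs

theorem notMem_degenerateChains [LinearOrder I] {c : V → I} {g : Finset I → Finset V →₀ A}
    (hg : IsSimplexChainMap (augBdry R A V) g) (hcol : ∀ S, g S ∈ coloredChains R A c S)
    (h0 : g ∅ ≠ 0) (S : Finset I) : g S ∉ degenerateChains R A c S := by
  induction S using Finset.induction_on with
  | empty => rwa [degenerateChains_empty, Submodule.mem_bot]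
  | insert i S hi ih =>
    intro hdeg
    refine ih (mem_degenerateChains_of_mem_sup hi (hcol S) ?_)
    have hbdry := map_augBdry_degenerateChains_insert_le c S i (Submodule.mem_map_of_mem hdeg)
    rw [hg, sum_insert hi, erase_insert hi] at hbdry
    refine (faceSign_smul_mem_iff _ (insert i S) i).1 <|
      (Submodule.add_mem_iff_left _ (Submodule.sum_mem _ fun j hj => ?_)).1 hbdry
    exact (faceSign_smul_mem_iff _ _ j).2 (mem_degenerateChains_sup_of_erase hj (hcol _))

end ColoredChains

section Rainbow

variable {R : Type*} [CommRing R] {A : Type*} [AddCommGroup A] [Module R A]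
variable {V : Type*} {I : Type*}

/-- The subcomplex `K_S` of `K` induced on the vertices with colours in `S`. -/
def inducedOn (K : Set (Finset V)) (c : V → I) (S : Finset I) : Set (Finset V) :=
  {s ∈ K | ∀ v ∈ s, c v ∈ S}

theorem isComplex_inducedOn {K : Set (Finset V)} (hK : IsComplex K) (c : V → I)
    (S : Finset I) : IsComplex (inducedOn K c S) :=
  ⟨fun s hs => hK.1 s hs.1,
    fun s hs t hts ht => ⟨hK.2 s hs.1 t hts ht, fun v hv => hs.2 v (hts hv)⟩⟩

theorem inducedOn_mono (K : Set (Finset V)) (c : V → I) {S T : Finset I} (h : S ⊆ T) :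
    inducedOn K c S ⊆ inducedOn K c T :=
  fun _ hs => ⟨hs.1, fun v hv => h (hs.2 v hv)⟩

theorem augChains_inducedOn_le_coloredChains [LinearOrder V] [DecidableEq I]
    (K : Set (Finset V)) (c : V → I) (S : Finset I) (k : ℕ) :
    augChains R A (inducedOn K c S) k ≤ coloredChains R A c S := by
  refine Finsupp.supported_mono ?_
  rintro s ⟨rfl | hs, -⟩
  · exact empty_subset S
  · exact image_subset_iff.2 hs.2

theorem exists_isSimplexChainMap_inducedOn [LinearOrder V] [LinearOrder I] {K : Set (Finset V)}
    (hK : IsComplex K) (c : V → I)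
    (h : ∀ S : Finset I, S.Nonempty → RedHVanish R A V (inducedOn K c S) ((S.card : ℤ) - 2))
    (a : A) :
    ∃ g : Finset I → Finset V →₀ A, IsSimplexChainMap (augBdry R A V) g ∧
      g ∅ = Finsupp.single ∅ a ∧ ∀ S, g S ∈ augChains R A (inducedOn K c S) S.card := by
  refine exists_isSimplexChainMap_of_acyclic_carrier (augBdry R A V)
    (fun S => augChains R A (inducedOn K c S) S.card)
    (single_empty_mem_augChains _ a) (by simp [augBdry_single]) fun S hS => ?_
  obtain ⟨k, hk⟩ := Nat.exists_eq_succ_of_ne_zero hS.card_ne_zero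
  have hvanish : RedHVanish R A V (inducedOn K c S) (k - 1) := by
    convert h S hS using 1
    lia
  have hfaces : ⨆ i ∈ S, augChains R A (inducedOn K c (S.erase i)) (S.erase i).card ≤
      augChains R A (inducedOn K c S) k := by
    refine iSup₂_le fun i hi => ?_
    rw [card_erase_of_mem hi, hk, Nat.succ_sub_one]
    exact augChains_mono (inducedOn_mono K c (erase_subset i S)) k
  rw [hk]
  exact (inf_le_inf_right _ hfaces).trans
    (augChains_inf_ker_le_map_augBdry (isComplex_inducedOn hK c S) hvanish)

theorem existsUnique_mem_of_image_eq_univ [Fintype I] [DecidableEq I] {c : V → I} {s : Finset V}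
    (himage : s.image c = univ) (hcard : s.card = Fintype.card I) (i : I) :
    ∃! v, v ∈ s ∧ c v = i := by
  have hinj : Set.InjOn c s := card_image_iff.1 <| by rw [himage, card_univ, hcard]
  obtain ⟨v, hv, rfl⟩ := mem_image.1 (himage ▸ mem_univ i)
  exact ⟨v, ⟨hv, rfl⟩, fun w hw => hinj hw.1 hv hw.2⟩

end Rainbow

end HomologicalSperner

open HomologicalSperner in
theorem homological_sperner_general {R : Type*} [CommRing R] {A : Type*} [AddCommGroup A]
    [Module R A] [Nontrivial A] {V : Type*} [LinearOrder V] {I : Type*} [Finite I] [Nonempty I]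
    {K : Set (Finset V)} (hK : IsComplex K) (c : V → I)
    (h : ∀ S : Finset I, S.Nonempty →
      RedHVanish R A V {s ∈ K | ∀ v ∈ s, c v ∈ S} ((S.card : ℤ) - 2)) :
    ∃ s ∈ K, ∀ i : I, ∃! v, v ∈ s ∧ c v = i := by
  cases nonempty_fintype I
  let _ : LinearOrder I := LinearOrder.lift' (Fintype.equivFin I) (Fintype.equivFin I).injective
  obtain ⟨a, ha⟩ := exists_ne (0 : A)
  obtain ⟨g, hg, hg0, hgC⟩ := exists_isSimplexChainMap_inducedOn hK c h a
  have hcol (S : Finset I) : g S ∈ coloredChains R A c S :=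
    augChains_inducedOn_le_coloredChains K c S _ (hgC S)
  have hdeg : g univ ∉ degenerateChains R A c univ :=
    notMem_degenerateChains hg hcol (by rwa [hg0, Finsupp.single_ne_zero]) univ
  obtain ⟨s, hs, himage⟩ := Set.not_subset.1 fun hsub =>
    hdeg (supported_le_degenerateChains c univ hsub)
  obtain ⟨hsK, hcard⟩ := hgC univ hs
  rw [card_univ] at hcard
  have hne : s ≠ ∅ := card_ne_zero.1 (hcard ▸ Fintype.card_ne_zero) |>.ne_empty
  refine ⟨s, (hsK.resolve_left hne).1, existsUnique_mem_of_image_eq_univ ?_ hcard⟩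
  by_contra hcon
  exact himage (ssubset_univ_iff.2 hcon)

/-- Homological Sperner-type lemma (strengthened Meshulam lemma): if
`H̃_{|S|-2}(K_S, F) = 0` for every nonempty set `S` of colours, then `K` contains a
rainbow simplex. -/
theorem homological_sperner {V : Type*} [LinearOrder V] (F : Type*) [Field F] (m : ℕ)
    (K : Set (Finset V)) (hK : IsComplex K) (hvert : ∀ v : V, {v} ∈ K)
    (c : V → Fin (m + 1)) (hc : Function.Surjective c)
    (h : ∀ S : Finset (Fin (m + 1)), S.Nonempty →
      RedHVanish F F V {s ∈ K | ∀ v ∈ s, c v ∈ S} ((S.card : ℤ) - 2)) :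
    ∃ s ∈ K, ∀ i : Fin (m + 1), ∃! v, v ∈ s ∧ c v = i :=
  homological_sperner_general hK c h
end
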